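/- arXiv:2203.01230 — 4 statements merged into one kernel-verified Lean document; each statement's English description precedes it below -/
import Mathlib

section
/- Let Ω, τ, ζ, s_* ∈ ℝ, m ∈ ℤ, j ∈ ℕ, h ∈ ℂ, and let u : ℝ → ℂ satisfy u(s) = (−1)^j · u(s_* − s) for all s ∈ [0, s_*], with u(s₀) ≠ 0 for some s₀ ∈ [0, s_*]. Define Ψ(t,s,φ) = exp(−iΩt)·u(s)·exp(i m φ). If Ψ(t,s,φ) − h·Ψ(t−τ, s_* − s, φ−ζ) = 0 holds for all t, φ ∈ ℝ and all s ∈ [0, s_*], then necessarily h = (−1)^j · exp(i(−Ωτ + mζ)). -/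
open Complex

/-- Uniqueness of the multiplicative factor for the reflection radial shift:
if the control term is noninvasive on a nontrivial m-armed spiral wave Ansatz
with ℤ₂-radial-symmetry of nodal class `j`, then necessarily
`h = (−1)^j · exp(i(−Ωτ + mζ))`. -/
theorem multiplicative_factor_unique_reflection_shift
    (Ω τ ζ sStar : ℝ) (m : ℤ) (j : ℕ) (h : ℂ) (u : ℝ → ℂ)
    (hsym : ∀ s ∈ Set.Icc (0 : ℝ) sStar, u s = (-1 : ℂ) ^ j * u (sStar - s))
    (hu : ∃ s₀ ∈ Set.Icc (0 : ℝ) sStar, u s₀ ≠ 0)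
    (Ψ : ℝ → ℝ → ℝ → ℂ)
    (hΨ : ∀ t s φ : ℝ,
      Ψ t s φ = Complex.exp (-Complex.I * Ω * t) * u s * Complex.exp (Complex.I * m * φ))
    (hinv : ∀ t φ : ℝ, ∀ s ∈ Set.Icc (0 : ℝ) sStar,
      Ψ t s φ - h * Ψ (t - τ) (sStar - s) (φ - ζ) = 0) :
    h = (-1 : ℂ) ^ j * Complex.exp (Complex.I * (-Ω * τ + m * ζ)) := by
  obtain ⟨s, hs, hne⟩ := hu
  have h1 := hinv τ ζ s hs
  have h2 := hsym s hs
  have hv : u (sStar - s) ≠ 0 := by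
    intro h0
    rw [h0, mul_zero] at h2
    exact hne h2
  have hE : Complex.exp (Complex.I * (-Ω * τ + m * ζ))
      = Complex.exp (-Complex.I * Ω * τ) * Complex.exp (Complex.I * m * ζ) := by
    rw [← Complex.exp_add]
    congr 1
    ring
  rw [hΨ, hΨ, h2] at h1
  simp only [sub_self, Complex.ofReal_zero, mul_zero, Complex.exp_zero, one_mul, mul_one] at h1
  apply mul_right_cancel₀ hv
  rw [hE]
  linear_combination -h1
end

section
/- (Failure of stabilization by pure time delays.) Let μ₀* > 0, b ∈ ℝ, and τ ≥ 0. Then the function J(μ) = μ − μ₀* + b·(1 − exp(−τμ)) has a positive zero: there exists μ̃ > 0 with μ̃ − μ₀* + b·(1 − exp(−τμ̃)) = 0. Consequently, for pure temporal Pyragas control (space shift ζ = 0) the characteristic equations always admit a solution with positive real part μ̃ > 0 (and ν = 0), whenever the uncontrolled principal eigenvalue μ₀* is positive. -/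
/-- Failure of stabilization by pure time delays: if the uncontrolled principal
eigenvalue `μ₀* > 0`, then for any feedback gain `b ∈ ℝ` and delay `τ ≥ 0` the
function `J(μ) = μ − μ₀* + b·(1 − exp(−τμ))` has a positive zero, i.e. the
characteristic equations admit a solution with positive real part. -/
theorem pure_time_delay_fails
    (μStar b τ : ℝ) (hμ : 0 < μStar) (hτ : 0 ≤ τ) :
    ∃ μt : ℝ, 0 < μt ∧ μt - μStar + b * (1 - Real.exp (-τ * μt)) = 0 := by
  have hM : 0 ≤ μStar + |b| := by positivity
  have hc : ContinuousOn (fun x : ℝ => x - μStar + b * (1 - Real.exp (-τ * x)))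
      (Set.Icc 0 (μStar + |b|)) := by fun_prop
  have he1 : Real.exp (-τ * (μStar + |b|)) ≤ 1 :=
    Real.exp_le_one_iff.mpr (by nlinarith [mul_nonneg hτ hM])
  have he0 := Real.exp_pos (-τ * (μStar + |b|))
  have hmem : (0 : ℝ) ∈ Set.Icc
      ((fun x : ℝ => x - μStar + b * (1 - Real.exp (-τ * x))) 0)
      ((fun x : ℝ => x - μStar + b * (1 - Real.exp (-τ * x))) (μStar + |b|)) := by
    constructor
    · simp [hμ.le]
    · show 0 ≤ μStar + |b| - μStar + b * (1 - Real.exp (-τ * (μStar + |b|)))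
      nlinarith [neg_abs_le b, abs_nonneg b,
        mul_nonneg (sub_nonneg.mpr he1) (by linarith [neg_abs_le b] : 0 ≤ b + |b|),
        mul_nonneg he0.le (abs_nonneg b)]
  obtain ⟨x, hx, hx0⟩ := intermediate_value_Icc hM hc hmem
  have hx0' : x - μStar + b * (1 - Real.exp (-τ * x)) = 0 := hx0
  refine ⟨x, lt_of_le_of_ne hx.1 ?_, hx0'⟩
  rintro rfl
  simp at hx0'
  linarith
end

section
/- Let δ > 0, b < 0, τ ≥ 0, and let μ, ν, μ̂ ∈ ℝ satisfy μ̂ ≤ −2δ, μ ≥ −δ, and the squared characteristic relation (|b| + μ − μ̂)² + ν² = b²·e^{−2τμ}. Then the time delay obeys the lower bound τ ≥ (1/(2δ))·log((1 + μ/|b| − μ̂/|b|)² + ν²/b²) ≥ (1/δ)·log(1 + δ/|b|) > 0. -/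
/-- Lower bound for the time delay: if `μ̂ ≤ −2δ`, `μ ≥ −δ` and the squared
characteristic relation `(|b| + μ − μ̂)² + ν² = b²·e^{−2τμ}` holds, then
`τ ≥ (1/(2δ))·log((1 + μ/|b| − μ̂/|b|)² + ν²/b²) ≥ (1/δ)·log(1 + δ/|b|) > 0`. -/
theorem delay_lower_bound
    (δ b τ μ ν μhat : ℝ) (hδ : 0 < δ) (hb : b < 0) (hτ : 0 ≤ τ)
    (hμhat : μhat ≤ -2 * δ) (hμ : -δ ≤ μ)
    (hsq : (|b| + μ - μhat) ^ 2 + ν ^ 2 = b ^ 2 * Real.exp (-2 * τ * μ)) :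
    τ ≥ (1 / (2 * δ)) * Real.log ((1 + μ / |b| - μhat / |b|) ^ 2 + ν ^ 2 / b ^ 2) ∧
    (1 / (2 * δ)) * Real.log ((1 + μ / |b| - μhat / |b|) ^ 2 + ν ^ 2 / b ^ 2) ≥
      (1 / δ) * Real.log (1 + δ / |b|) ∧
    0 < (1 / δ) * Real.log (1 + δ / |b|) := by
  have hbp : 0 < |b| := abs_pos.mpr hb.ne
  have hE : (1 + μ / |b| - μhat / |b|) ^ 2 + ν ^ 2 / b ^ 2 = Real.exp (-2 * τ * μ) := by
    have h1 : (1 + μ / |b| - μhat / |b|) ^ 2 + ν ^ 2 / b ^ 2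
        = ((|b| + μ - μhat) ^ 2 + ν ^ 2) / b ^ 2 := by
      rw [← sq_abs b]
      field_simp
    rw [h1, hsq]
    have : b ≠ 0 := hb.ne
    field_simp
  have hd : 0 < δ / |b| := div_pos hδ hbp
  refine ⟨?_, ?_, ?_⟩
  · rw [hE, Real.log_exp, ge_iff_le, one_div, inv_mul_le_iff₀ (by positivity)]
    nlinarith [mul_nonneg hτ (by linarith : 0 ≤ δ + μ)]
  · have h2 : 1 + δ / |b| ≤ 1 + μ / |b| - μhat / |b| := by
      have : δ / |b| ≤ (μ - μhat) / |b| := by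
        gcongr
        linarith
      rw [sub_div] at this
      linarith
    have h3 : (1 + δ / |b|) ^ 2 ≤ (1 + μ / |b| - μhat / |b|) ^ 2 + ν ^ 2 / b ^ 2 := by
      have h4 : (1 + δ / |b|) ^ 2 ≤ (1 + μ / |b| - μhat / |b|) ^ 2 :=
        pow_le_pow_left₀ (by positivity) h2 2
      have h5 : 0 ≤ ν ^ 2 / b ^ 2 := by positivity
      linarith
    have h6 := Real.log_le_log (by positivity) h3
    rw [Real.log_pow] at h6
    push_cast at h6
    have h7 : (1 / δ) * Real.log (1 + δ / |b|)
        = (1 / (2 * δ)) * (2 * Real.log (1 + δ / |b|)) := by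
      field_simp
    rw [h7, ge_iff_le]
    exact mul_le_mul_of_nonneg_left h6 (by positivity)
  · exact mul_pos (by positivity) (Real.log_pos (by linarith))
end

section
/- (Persistence of the spectral gap under small time delays.) Let δ > 0, b < 0, and define τ̲ = (1/δ)·log(1 + δ/|b|) > 0. Let τ ∈ [0, τ̲), let χ ∈ {−1, 1}, θ ∈ ℝ, and let μ̂ ≤ −2δ. Then every solution (μ, ν) ∈ ℝ² of the characteristic equations μ = μ̂ + b·(1 + χ·e^{−τμ}·cos θ) and ν = χ·b·e^{−τμ}·sin θ satisfies μ < −δ. -/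
/-- Persistence of the spectral gap under small time delays: for `b < 0` and
`τ` below the threshold `τ̲ = (1/δ)·log(1 + δ/|b|)`, every solution of the
characteristic equations arising from an uncontrolled eigenvalue `μ̂ ≤ −2δ`
satisfies `μ < −δ`. -/
theorem spectral_gap_persists
    (δ b : ℝ) (hδ : 0 < δ) (hb : b < 0)
    (τ : ℝ) (hτ0 : 0 ≤ τ) (hτ : τ < (1 / δ) * Real.log (1 + δ / |b|))
    (χ : ℝ) (hχ : χ = -1 ∨ χ = 1) (θ : ℝ) (μhat : ℝ) (hμhat : μhat ≤ -2 * δ)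
    (μ ν : ℝ)
    (h1 : μ = μhat + b * (1 + χ * Real.exp (-τ * μ) * Real.cos θ))
    (h2 : ν = χ * b * Real.exp (-τ * μ) * Real.sin θ) :
    μ < -δ := by
  by_contra hcon
  have hcon' : -δ ≤ μ := not_lt.mp hcon
  rw [abs_of_neg hb] at hτ
  have hnb : 0 < -b := by linarith
  have hpos : 0 < 1 + δ / (-b) := by positivity
  have hlog : τ * δ < Real.log (1 + δ / (-b)) := by
    have h := mul_lt_mul_of_pos_right hτ hδ
    have e : (1 / δ) * Real.log (1 + δ / (-b)) * δ = Real.log (1 + δ / (-b)) := by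
      field_simp
    linarith
  have hE : Real.exp (-τ * μ) < 1 + δ / (-b) := by
    rw [← Real.lt_log_iff_exp_lt hpos]
    nlinarith
  have hE' : (-b) * Real.exp (-τ * μ) < -b + δ := by
    have h := mul_lt_mul_of_pos_left hE hnb
    have e : (-b) * (1 + δ / (-b)) = -b + δ := by
      rw [mul_add, mul_div_cancel₀ _ hnb.ne', mul_one]
    linarith
  have hc : -1 ≤ χ * Real.cos θ := by
    rcases hχ with h | h <;> subst h
    · linarith [Real.cos_le_one θ]
    · linarith [Real.neg_one_le_cos θ]
  have hp : 0 < (-b) * Real.exp (-τ * μ) := mul_pos hnb (Real.exp_pos _)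
  have hm := mul_le_mul_of_nonneg_left hc hp.le
  have e : b * (1 + χ * Real.exp (-τ * μ) * Real.cos θ)
      = b - (-b) * Real.exp (-τ * μ) * (χ * Real.cos θ) := by ring
  rw [e] at h1
  linarith
end
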